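/- Let δ21 = X² + 2X + 2, δ22 = X² + 2, and δ81 = X⁸ + 4X⁷ + 6X⁶ + 4X⁵ + 2X⁴ + 8X³ + 24X² + 32X + 16. Then for every n ≥ 4 and every finite field K with 2^n elements, the number of a ∈ K with T_1(a) = 0, T_2(a) = 0 and T_4(a) = 0 (with T_3(a) unrestricted) equals 2^{n−3} − (1/8)·(ρ_n(δ21) + 2ρ_n(δ22) + ρ_n(δ81)), as complex numbers. -/

import Mathlib

open Polynomial

/-- For a finite field `K` with `2^n` elements, the `k`-th trace function
`T_k(a) = Σ_S ∏_{i ∈ S} a^(2^i)`, the sum over all `k`-element subsets `S` of `{0,…,n-1}`. -/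
noncomputable def traceFn (q n k : ℕ) {K : Type*} [CommRing K] (a : K) : K :=
  ∑ S ∈ Finset.powersetCard k (Finset.range n), ∏ i ∈ S, a ^ (q ^ i)

/-- `ρ_n(γ)`: the sum of the `n`-th powers of the complex roots of `γ ∈ ℤ[X]`,
counted with multiplicity. -/
noncomputable def rho (n : ℕ) (γ : Polynomial ℤ) : ℂ :=
  ((γ.map (Int.castRingHom ℂ)).roots.map (· ^ n)).sum

noncomputable def d21 : Polynomial ℤ := X ^ 2 + 2 * X + 2
noncomputable def d22 : Polynomial ℤ := X ^ 2 + 2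
noncomputable def d81 : Polynomial ℤ :=
  X ^ 8 + 4 * X ^ 7 + 6 * X ^ 6 + 4 * X ^ 5 + 2 * X ^ 4 + 8 * X ^ 3 + 24 * X ^ 2 + 32 * X + 16

abbrev F2X := (ZMod 2)[X]

/-- monic polynomials of degree `m` over `F_2` -/
noncomputable def Mon : ℕ → Finset F2X
  | 0 => {1}
  | m + 1 => by
      classical
      exact (Mon m ×ˢ (Finset.univ : Finset (ZMod 2))).image fun p => X * p.1 + C p.2

lemma mem_Mon (m : ℕ) (f : F2X) : f ∈ Mon m ↔ f.Monic ∧ f.natDegree = m := by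
  induction m generalizing f with
  | zero =>
    simp only [Mon, Finset.mem_singleton]
    constructor
    · rintro rfl; simp
    · rintro ⟨h, h'⟩; exact h.natDegree_eq_zero.1 h'
  | succ m ih =>
    simp only [Mon, Finset.mem_image, Finset.mem_product, Finset.mem_univ, and_true, Prod.exists, ih]
    constructor
    · rintro ⟨g, b, ⟨hg, hd⟩, rfl⟩
      have h0 : (X * g).Monic := monic_X.mul hg
      have h1 : (X * g).natDegree = m + 1 := by
        rw [natDegree_mul X_ne_zero hg.ne_zero]; simp [hd, add_comm]
      refine ⟨?_, ?_⟩
      · apply h0.add_of_left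
        apply lt_of_le_of_lt degree_C_le
        rw [degree_eq_natDegree h0.ne_zero, h1]
        exact_mod_cast Nat.succ_pos m
      · rw [natDegree_add_C, h1]
    · rintro ⟨hf, hd⟩
      refine ⟨f.divX, f.coeff 0, ⟨?_, ?_⟩, ?_⟩
      · have : f.divX.natDegree = m := by rw [natDegree_divX_eq_natDegree_tsub_one, hd]; rfl
        rw [Monic, leadingCoeff, this, coeff_divX, ← hd]; exact hf
      · rw [natDegree_divX_eq_natDegree_tsub_one, hd]; rfl
      · rw [mul_comm]; exact divX_mul_X_add f

lemma sum_Mon_succ {M : Type*} [AddCommMonoid M] (m : ℕ) (g : F2X → M) :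
    ∑ f ∈ Mon (m + 1), g f = ∑ f ∈ Mon m, (g (X * f) + g (X * f + 1)) := by
  classical
  rw [Mon, Finset.sum_image, Finset.sum_product]
  · refine Finset.sum_congr rfl fun f _ => ?_
    have : (Finset.univ : Finset (ZMod 2)) = {0, 1} := by decide
    rw [this, Finset.sum_pair (by decide)]; simp
  · rintro ⟨f, b⟩ _ ⟨g, c⟩ _ h
    simp only at h
    have h0 : b = c := by simpa using congrArg (fun p => coeff p 0) h
    subst h0
    have h1 := add_right_cancel h
    have := mul_left_cancel₀ X_ne_zero h1
    simp [this]

lemma rev_X_mul (f : F2X) : (X * f).reverse = f.reverse := by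
  rw [mul_comm, reverse_mul_X]

lemma rev_X_mul_add (m : ℕ) (f : F2X) (hf : f ∈ Mon m) :
    (X * f + 1).reverse = f.reverse + X ^ (m + 1) := by
  obtain ⟨h1, h2⟩ := (mem_Mon m f).1 hf
  have hd : (X * f).natDegree = m + 1 := by
    rw [natDegree_mul X_ne_zero h1.ne_zero]; simp [h2, add_comm]
  have hd' : (X * f + 1).natDegree = m + 1 := by
    rw [← C_1, natDegree_add_C, hd]
  rw [← rev_X_mul f, reverse, reverse, hd', hd, reflect_add, ← C_1, reflect_C]; simp

/-- logarithm table -/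
def tab (a b c d : ZMod 2) : ℕ :=
  match a.val, b.val, c.val, d.val with
  | 0, 0, _, 0 => 0
  | 0, 0, _, _ => 4
  | 0, _, _, 0 => 2
  | 0, _, _, _ => 6
  | _, 0, 0, 0 => 1
  | _, 0, 0, _ => 5
  | _, 0, _, 0 => 5
  | _, 0, _, _ => 1
  | _, _, 0, 0 => 7
  | _, _, 0, _ => 3
  | _, _, _, 0 => 3
  | _, _, _, _ => 7

lemma tab_mul : ∀ a b c d a' b' c' d' : ZMod 2,
    tab (a + a') (b + a * a' + b') (c + b * a' + a * b' + c')
      (d + c * a' + b * b' + a * c' + d') % 8 = (tab a b c d + tab a' b' c' d') % 8 := by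
  decide

lemma tab_lt : ∀ a b c d : ZMod 2, tab a b c d < 8 := by decide
lemma tab_zero : ∀ a b c d : ZMod 2, tab a b c d = 0 ↔ a = 0 ∧ b = 0 ∧ d = 0 := by decide

noncomputable def lg (f : F2X) : ℕ :=
  tab (f.reverse.coeff 1) (f.reverse.coeff 2) (f.reverse.coeff 3) (f.reverse.coeff 4)

noncomputable def chi (w : ℂ) (f : F2X) : ℂ := w ^ lg f

lemma chi_mul (w : ℂ) (hw : w ^ 8 = 1) (f g : F2X) (hf : f.Monic) (hg : g.Monic) :
    chi w (f * g) = chi w f * chi w g := by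
  have h0 : f.reverse.coeff 0 = 1 := by rw [coeff_zero_reverse]; exact hf
  have h0' : g.reverse.coeff 0 = 1 := by rw [coeff_zero_reverse]; exact hg
  have h := tab_mul (f.reverse.coeff 1) (f.reverse.coeff 2) (f.reverse.coeff 3) (f.reverse.coeff 4)
    (g.reverse.coeff 1) (g.reverse.coeff 2) (g.reverse.coeff 3) (g.reverse.coeff 4)
  have key : lg (f * g) % 8 = (lg f + lg g) % 8 := by
    rw [lg, reverse_mul_of_domain, lg, lg, ← h]
    simp only [coeff_mul, Finset.Nat.antidiagonal_succ, Finset.Nat.antidiagonal_zero,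
      Finset.sum_cons, Finset.map_singleton, Finset.sum_singleton, Finset.map_cons,
      Function.Embedding.prodMap, Function.Embedding.coeFn_mk, Prod.map, Function.Embedding.refl_apply, h0, h0']
    congr 2 <;> simp only [Nat.succ_eq_add_one, Nat.reduceAdd] <;> ring
  rw [chi, chi, chi, ← pow_add, pow_eq_pow_mod _ hw, key, ← pow_eq_pow_mod _ hw]

lemma chi_one (w : ℂ) : chi w 1 = 1 := by
  have : lg 1 = 0 := by
    rw [lg, ← C_1, reverse_C]; simp only [coeff_C]; decide
  rw [chi, this, pow_zero]

lemma chi_pow (w : ℂ) (hw : w ^ 8 = 1) (f : F2X) (hf : f.Monic) (k : ℕ) :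
    chi w (f ^ k) = chi w f ^ k := by
  induction k with
  | zero => simp [chi_one]
  | succ k ih => rw [pow_succ, pow_succ, chi_mul w hw _ _ (hf.pow k) hf, ih]

noncomputable def cc (w : ℂ) (m : ℕ) : ℂ := ∑ f ∈ Mon m, chi w f

lemma cc_zero (w : ℂ) : cc w 0 = 1 := by simp [cc, Mon, chi_one]

lemma rev_succ (m : ℕ) (f : F2X) (hf : f ∈ Mon m) (i : ℕ) :
    (X * f).reverse.coeff i = f.reverse.coeff i ∧
    (X * f + 1).reverse.coeff i = f.reverse.coeff i + if i = m + 1 then 1 else 0 := by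
  rw [rev_X_mul, rev_X_mul_add m f hf]; simp [coeff_X_pow]

lemma mem_succ (m : ℕ) (f : F2X) (hf : f ∈ Mon m) : X * f ∈ Mon (m + 1) ∧ X * f + 1 ∈ Mon (m + 1) := by
  classical
  constructor
  · rw [Mon, Finset.mem_image]; exact ⟨(f, 0), by simp [hf], by simp⟩
  · rw [Mon, Finset.mem_image]; exact ⟨(f, 1), by simp [hf], by simp⟩

lemma sum_top (m : ℕ) (G : (ℕ → ZMod 2) → ℂ) :
    ∑ f ∈ Mon (m + 1), G (fun i => f.reverse.coeff i) =
      ∑ f ∈ Mon m, (G (fun i => f.reverse.coeff i) +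
        G (fun i => f.reverse.coeff i + if i = m + 1 then 1 else 0)) := by
  rw [sum_Mon_succ]
  refine Finset.sum_congr rfl fun f hf => ?_
  simp only [(rev_succ m f hf _).1, (rev_succ m f hf _).2]

lemma sum_top_zero (G : (ℕ → ZMod 2) → ℂ) :
    ∑ f ∈ Mon 0, G (fun i => f.reverse.coeff i) = G (fun i => if i = 0 then 1 else 0) := by
  rw [Mon, Finset.sum_singleton, ← C_1, reverse_C]
  simp only [coeff_C]

lemma Ph0 (H : ZMod 2 → ZMod 2 → ZMod 2 → ZMod 2 → ℂ) :
    ∑ f ∈ Mon 0, H (f.reverse.coeff 1) (f.reverse.coeff 2) (f.reverse.coeff 3) (f.reverse.coeff 4)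
      = H 0 0 0 0 :=
  sum_top_zero (fun u => H (u 1) (u 2) (u 3) (u 4))

lemma Ph1 (H : ZMod 2 → ZMod 2 → ZMod 2 → ZMod 2 → ℂ) :
    ∑ f ∈ Mon 1, H (f.reverse.coeff 1) (f.reverse.coeff 2) (f.reverse.coeff 3) (f.reverse.coeff 4)
      = H 0 0 0 0 + H 1 0 0 0 := by
  refine (sum_top 0 (fun u => H (u 1) (u 2) (u 3) (u 4))).trans ?_
  refine Eq.trans ?_ ((Ph0 (fun a b c d => H a b c d + H (a + 1) b c d)).trans ?_)
  · simp
  · simp only [zero_add]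

lemma Ph2 (H : ZMod 2 → ZMod 2 → ZMod 2 → ZMod 2 → ℂ) :
    ∑ f ∈ Mon 2, H (f.reverse.coeff 1) (f.reverse.coeff 2) (f.reverse.coeff 3) (f.reverse.coeff 4)
      = H 0 0 0 0 + H 0 1 0 0 + H 1 0 0 0 + H 1 1 0 0 := by
  refine (sum_top 1 (fun u => H (u 1) (u 2) (u 3) (u 4))).trans ?_
  refine Eq.trans ?_ ((Ph1 (fun a b c d => H a b c d + H a (b + 1) c d)).trans ?_)
  · simp
  · simp only [zero_add]; ring

lemma Ph3 (H : ZMod 2 → ZMod 2 → ZMod 2 → ZMod 2 → ℂ) :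
    ∑ f ∈ Mon 3, H (f.reverse.coeff 1) (f.reverse.coeff 2) (f.reverse.coeff 3) (f.reverse.coeff 4)
      = H 0 0 0 0 + H 0 0 1 0 + H 0 1 0 0 + H 0 1 1 0 + H 1 0 0 0 + H 1 0 1 0 + H 1 1 0 0
        + H 1 1 1 0 := by
  refine (sum_top 2 (fun u => H (u 1) (u 2) (u 3) (u 4))).trans ?_
  refine Eq.trans ?_ ((Ph2 (fun a b c d => H a b c d + H a b (c + 1) d)).trans ?_)
  · simp
  · simp only [zero_add]; ring

lemma Ph4 (H : ZMod 2 → ZMod 2 → ZMod 2 → ZMod 2 → ℂ) :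
    ∑ f ∈ Mon 4, H (f.reverse.coeff 1) (f.reverse.coeff 2) (f.reverse.coeff 3) (f.reverse.coeff 4)
      = H 0 0 0 0 + H 0 0 1 0 + H 0 1 0 0 + H 0 1 1 0 + H 1 0 0 0 + H 1 0 1 0 + H 1 1 0 0
        + H 1 1 1 0 + (H 0 0 0 1 + H 0 0 1 1 + H 0 1 0 1 + H 0 1 1 1 + H 1 0 0 1 + H 1 0 1 1
        + H 1 1 0 1 + H 1 1 1 1) := by
  refine (sum_top 3 (fun u => H (u 1) (u 2) (u 3) (u 4))).trans ?_
  refine Eq.trans ?_ ((Ph3 (fun a b c d => H a b c d + H a b c (d + 1))).trans ?_)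
  · simp
  · simp only [zero_add]; ring

lemma cc_one (w : ℂ) : cc w 1 = 1 + w := by
  refine (Ph1 (fun a b c d => w ^ tab a b c d)).trans ?_
  norm_num [show tab 0 0 0 0 = 0 from rfl, show tab 1 0 0 0 = 1 from rfl]

lemma cc_two (w : ℂ) : cc w 2 = 1 + w + w ^ 2 + w ^ 7 := by
  refine (Ph2 (fun a b c d => w ^ tab a b c d)).trans ?_
  rw [show tab 0 0 0 0 = 0 from rfl, show tab 1 0 0 0 = 1 from rfl, show tab 0 1 0 0 = 2 from rfl,
    show tab 1 1 0 0 = 7 from rfl]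
  ring

lemma cc_three (w : ℂ) : cc w 3 = 2 + w + 2 * w ^ 2 + w ^ 3 + w ^ 5 + w ^ 7 := by
  refine (Ph3 (fun a b c d => w ^ tab a b c d)).trans ?_
  rw [show tab 0 0 0 0 = 0 from rfl, show tab 1 0 0 0 = 1 from rfl, show tab 0 1 0 0 = 2 from rfl,
    show tab 1 1 0 0 = 7 from rfl, show tab 0 0 1 0 = 0 from rfl, show tab 1 0 1 0 = 5 from rfl,
    show tab 0 1 1 0 = 2 from rfl, show tab 1 1 1 0 = 3 from rfl]
  ring

lemma cc_ge_four (w : ℂ) (h : 1 + w + w ^ 2 + w ^ 3 + w ^ 4 + w ^ 5 + w ^ 6 + w ^ 7 = 0)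
    (m : ℕ) (hm : 4 ≤ m) : cc w m = 0 := by
  induction m, hm using Nat.le_induction with
  | base =>
    refine (Ph4 (fun a b c d => w ^ tab a b c d)).trans ?_
    rw [show tab 0 0 0 0 = 0 from rfl, show tab 1 0 0 0 = 1 from rfl, show tab 0 1 0 0 = 2 from rfl,
      show tab 1 1 0 0 = 7 from rfl, show tab 0 0 1 0 = 0 from rfl, show tab 1 0 1 0 = 5 from rfl,
      show tab 0 1 1 0 = 2 from rfl, show tab 1 1 1 0 = 3 from rfl,
      show tab 0 0 0 1 = 4 from rfl, show tab 1 0 0 1 = 5 from rfl, show tab 0 1 0 1 = 6 from rfl,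
      show tab 1 1 0 1 = 3 from rfl, show tab 0 0 1 1 = 4 from rfl, show tab 1 0 1 1 = 1 from rfl,
      show tab 0 1 1 1 = 6 from rfl, show tab 1 1 1 1 = 7 from rfl]
    linear_combination 2 * h
  | succ m hm ih =>
    refine (sum_top m (fun u => w ^ tab (u 1) (u 2) (u 3) (u 4))).trans ?_
    have e1 : ¬ (1 = m + 1) := by omega
    have e2 : ¬ (2 = m + 1) := by omega
    have e3 : ¬ (3 = m + 1) := by omega
    have e4 : ¬ (4 = m + 1) := by omega
    simp only [e1, e2, e3, e4, if_false, add_zero, Finset.sum_add_distrib]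
    have : ∑ f ∈ Mon m, w ^ tab (f.reverse.coeff 1) (f.reverse.coeff 2) (f.reverse.coeff 3)
      (f.reverse.coeff 4) = 0 := ih
    rw [this, add_zero]
open Classical in
/-- monic irreducible polynomials of degree at most `M` -/
noncomputable def Irr (M : ℕ) : Finset F2X :=
  ((Finset.range (M + 1)).biUnion Mon).filter Irreducible

lemma mem_Irr (M : ℕ) (P : F2X) : P ∈ Irr M ↔ P.Monic ∧ P.natDegree ≤ M ∧ Irreducible P := by
  classical
  simp only [Irr, Finset.mem_filter, Finset.mem_biUnion, Finset.mem_range, mem_Mon]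
  constructor
  · rintro ⟨⟨d, hd, hm, rfl⟩, hi⟩; exact ⟨hm, by omega, hi⟩
  · rintro ⟨hm, hd, hi⟩; exact ⟨⟨_, by omega, hm, rfl⟩, hi⟩

lemma finmult (P f : F2X) (hP : Irreducible P) (hf : f ≠ 0) : FiniteMultiplicity P f :=
  FiniteMultiplicity.of_not_isUnit hP.not_isUnit hf

lemma mult_sum (M m : ℕ) (hm : m ≤ M) (f : F2X) (hf : f ∈ Mon m) :
    ∑ P ∈ Irr M, P.natDegree * multiplicity P f = m := by
  classical
  induction m using Nat.strong_induction_on generalizing f with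
  | _ m ih =>
  obtain ⟨h1, h2⟩ := (mem_Mon m f).1 hf
  by_cases hu : IsUnit f
  · have h3 := h1.eq_one_of_isUnit hu
    subst h3
    have : m = 0 := by simpa using h2.symm
    subst this
    apply Finset.sum_eq_zero
    intro P hP
    rw [mem_Irr] at hP
    have : multiplicity P 1 = 0 := multiplicity_eq_zero.2 (fun h => hP.2.2.not_isUnit (isUnit_of_dvd_one h))
    rw [this, mul_zero]
  · obtain ⟨Q, hQm, hQi, g, rfl⟩ := Polynomial.exists_monic_irreducible_factor f hu
    have hg : g.Monic := hQm.of_mul_monic_left h1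
    have hd : Q.natDegree + g.natDegree = m := by rw [← hQm.natDegree_mul hg, h2]
    have hQp := hQi.natDegree_pos
    have IH := ih g.natDegree (by omega) (by omega) g ((mem_Mon _ _).2 ⟨hg, rfl⟩)
    have key : ∀ P ∈ Irr M, P.natDegree * multiplicity P (Q * g) =
        (if P = Q then P.natDegree else 0) + P.natDegree * multiplicity P g := by
      intro P hP
      rw [mem_Irr] at hP
      rw [multiplicity_mul hP.2.2.prime (finmult P _ hP.2.2 h1.ne_zero), mul_add]
      congr 1
      split_ifs with h
      · subst h
        rw [multiplicity_self, mul_one]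
      · rw [multiplicity_eq_zero.2, mul_zero]
        intro hdv
        exact h (eq_of_monic_of_associated hP.1 hQm (hP.2.2.associated_of_dvd hQi hdv))
    rw [Finset.sum_congr rfl key, Finset.sum_add_distrib, IH, Finset.sum_ite_eq', if_pos, hd]
    rw [mem_Irr]; exact ⟨hQm, by omega, hQi⟩

lemma card_pow_dvd (M m : ℕ) (hm : m ≤ M) (f : F2X) (hf : f ∈ Mon m) (P : F2X) (hP : P ∈ Irr M)
    [DecidablePred fun k => P ^ k ∣ f] :
    ((Finset.Icc 1 M).filter (fun k => P ^ k ∣ f)).card = multiplicity P f := by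
  obtain ⟨h1, h2⟩ := (mem_Mon m f).1 hf
  rw [mem_Irr] at hP
  have fm := finmult P f hP.2.2 h1.ne_zero
  have hle : multiplicity P f ≤ M := by
    have h3 : P ^ multiplicity P f ∣ f := pow_multiplicity_dvd P f
    have h4 := natDegree_le_of_dvd h3 h1.ne_zero
    rw [natDegree_pow] at h4
    have := hP.2.2.natDegree_pos
    nlinarith
  have : (Finset.Icc 1 M).filter (fun k => P ^ k ∣ f) = Finset.Icc 1 (multiplicity P f) := by
    ext k
    simp only [Finset.mem_filter, Finset.mem_Icc, fm.pow_dvd_iff_le_multiplicity]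
    omega
  rw [this]; simp

open Classical in
lemma sum_dvd (w : ℂ) (hw : w ^ 8 = 1) (m d : ℕ) (g : F2X) (hg : g ∈ Mon d) :
    ∑ f ∈ Mon m, (if g ∣ f then chi w f else 0) =
      if d ≤ m then chi w g * cc w (m - d) else 0 := by
  obtain ⟨h1, h2⟩ := (mem_Mon d g).1 hg
  split_ifs with h
  · rw [cc, Finset.mul_sum, ← Finset.sum_filter]
    symm
    refine Finset.sum_bij (fun h _ => g * h) ?_ ?_ ?_ ?_
    · intro a ha
      rw [mem_Mon] at ha
      simp only [Finset.mem_filter, mem_Mon, dvd_mul_right, and_true]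
      exact ⟨h1.mul ha.1, by rw [h1.natDegree_mul ha.1]; omega⟩
    · intro a _ b _ hab
      exact mul_left_cancel₀ h1.ne_zero hab
    · intro b hb
      simp only [Finset.mem_filter, mem_Mon] at hb
      obtain ⟨⟨hb1, hb2⟩, a, rfl⟩ := hb
      have ha := h1.of_mul_monic_left hb1
      refine ⟨a, ?_, rfl⟩
      rw [mem_Mon]
      rw [h1.natDegree_mul ha] at hb2
      exact ⟨ha, by omega⟩
    · intro a ha
      rw [mem_Mon] at ha
      rw [chi_mul w hw _ _ h1 ha.1]
  · apply Finset.sum_eq_zero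
    intro f hf
    rw [mem_Mon] at hf
    rw [if_neg]
    intro hd
    have := natDegree_le_of_dvd hd hf.1.ne_zero
    omega

/-- the power sums attached to the character -/
noncomputable def SS (w : ℂ) (M j : ℕ) : ℂ :=
  ∑ P ∈ Irr M, ∑ k ∈ Finset.Icc 1 M,
    if k * P.natDegree = j then (P.natDegree : ℂ) * chi w P ^ k else 0

lemma newton (w : ℂ) (hw : w ^ 8 = 1) (M m : ℕ) (hm : m ≤ M) :
    (m : ℂ) * cc w m = ∑ j ∈ Finset.Icc 1 m, SS w M j * cc w (m - j) := by
  classical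
  have e1 : (m : ℂ) * cc w m = ∑ P ∈ Irr M, ∑ k ∈ Finset.Icc 1 M,
      (P.natDegree : ℂ) * ∑ f ∈ Mon m, (if P ^ k ∣ f then chi w f else 0) := by
    calc (m : ℂ) * cc w m = ∑ f ∈ Mon m, ∑ P ∈ Irr M, ∑ k ∈ Finset.Icc 1 M,
          (P.natDegree : ℂ) * (if P ^ k ∣ f then chi w f else 0) := by
          rw [cc, Finset.mul_sum]
          refine Finset.sum_congr rfl fun f hf => ?_
          have h := mult_sum M m hm f hf
          rw [← h]
          push_cast
          rw [Finset.sum_mul]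
          refine Finset.sum_congr rfl fun P hP => ?_
          rw [← card_pow_dvd M m hm f hf P hP, ← Finset.mul_sum, ← Finset.sum_filter,
            Finset.sum_const, nsmul_eq_mul]
          ring
      _ = _ := by
          rw [Finset.sum_comm]
          refine Finset.sum_congr rfl fun P hP => ?_
          rw [Finset.sum_comm]
          refine Finset.sum_congr rfl fun k hk => ?_
          rw [Finset.mul_sum]
  rw [e1]
  simp only [SS, Finset.sum_mul]
  conv_rhs => rw [Finset.sum_comm]
  refine Finset.sum_congr rfl fun P hP => ?_
  conv_rhs => rw [Finset.sum_comm]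
  refine Finset.sum_congr rfl fun k hk => ?_
  rw [mem_Irr] at hP
  rw [sum_dvd w hw m (k * P.natDegree) (P ^ k) ((mem_Mon _ _).2 ⟨hP.1.pow k, by simp⟩),
    chi_pow w hw P hP.1]
  have hpos : 1 ≤ k * P.natDegree := by
    have := hP.2.2.natDegree_pos
    have := (Finset.mem_Icc.1 hk).1
    exact Nat.mul_pos this hP.2.2.natDegree_pos
  simp only [ite_mul, zero_mul, Finset.sum_ite_eq, Finset.mem_Icc, hpos, true_and]
  split_ifs
  · ring
  · ring

lemma SS_eq (w : ℂ) (hw : w ^ 8 = 1)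
    (h : 1 + w + w ^ 2 + w ^ 3 + w ^ 4 + w ^ 5 + w ^ 6 + w ^ 7 = 0)
    (x y z : ℂ) (h1 : cc w 1 = -(x + y + z)) (h2 : cc w 2 = x * y + y * z + z * x)
    (h3 : cc w 3 = - (x * y * z)) (M m : ℕ) (hm : m ≤ M) (hm1 : 1 ≤ m) :
    SS w M m = -(x ^ m + y ^ m + z ^ m) := by
  have h0 := cc_zero w
  induction m using Nat.strong_induction_on with
  | _ m ih =>
  have N := newton w hw M m hm
  rcases (by omega : m = 1 ∨ m = 2 ∨ m = 3 ∨ 4 ≤ m) with rfl | rfl | rfl | h4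
  · simp [h0, h1] at N
    rw [← N]; ring
  · have i1 := ih 1 (by omega) (by omega) (by omega)
    simp [Finset.sum_Icc_succ_top, h0, h1, h2, i1] at N
    linear_combination -N
  · have i1 := ih 1 (by omega) (by omega) (by omega)
    have i2 := ih 2 (by omega) (by omega) (by omega)
    simp [Finset.sum_Icc_succ_top, h0, h1, h2, h3, i1, i2] at N
    linear_combination -N
  · obtain ⟨r, rfl⟩ : ∃ r, m = r + 4 := ⟨m - 4, by omega⟩
    have i1 := ih (r + 1) (by omega) (by omega) (by omega)
    have i2 := ih (r + 2) (by omega) (by omega) (by omega)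
    have i3 := ih (r + 3) (by omega) (by omega) (by omega)
    rw [cc_ge_four w h _ h4, Finset.sum_Icc_succ_top (by omega), Finset.sum_Icc_succ_top (by omega),
      Finset.sum_Icc_succ_top (by omega), Finset.sum_Icc_succ_top (by omega),
      Finset.sum_eq_zero] at N
    · rw [show r + 3 + 1 - (r + 3 + 1) = 0 by omega, show r + 3 + 1 - (r + 2 + 1) = 1 by omega,
        show r + 3 + 1 - (r + 1 + 1) = 2 by omega, show r + 3 + 1 - (r + 1) = 3 by omega,
        h0, h1, h2, h3, i1, i2, i3] at N
      linear_combination -N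
    · intro j hj
      rw [Finset.mem_Icc] at hj
      rw [cc_ge_four w h _ (by omega), mul_zero]
section field
variable (K : Type) [Field K] [Fintype K] [Algebra (ZMod 2) K]

/-- the characteristic polynomial, as a product over conjugates -/
noncomputable def FF {K : Type} [Field K] (n : ℕ) (a : K) : K[X] :=
  ∏ i ∈ Finset.range n, (X + C (a ^ 2 ^ i))

lemma FF_monic {K : Type} [Field K] (n : ℕ) (a : K) : (FF n a).Monic :=
  monic_prod_of_monic _ _ fun i _ => monic_X_add_C _

lemma FF_natDegree {K : Type} [Field K] (n : ℕ) (a : K) : (FF n a).natDegree = n := by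
  rw [FF, natDegree_prod_of_monic _ _ fun _ _ => monic_X_add_C _]
  simp only [natDegree_X_add_C, Finset.sum_const, Finset.card_range, smul_eq_mul, mul_one]

lemma exists_G (n : ℕ) (hK : Fintype.card K = 2 ^ n) (a : K) :
    ∃ k, FF n a = (minpoly (ZMod 2) a ^ k).map (algebraMap (ZMod 2) K) ∧
      k * (minpoly (ZMod 2) a).natDegree = n := by
  have : CharP K 2 := charP_of_injective_algebraMap (algebraMap (ZMod 2) K).injective 2
  have : ExpChar K 2 := ExpChar.prime Nat.prime_two
  have hint : IsIntegral (ZMod 2) a := Algebra.IsIntegral.isIntegral a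
  have han : a ^ 2 ^ n = a := by rw [← hK]; exact FiniteField.pow_card a
  -- Frobenius invariance
  have hfrob : (FF n a).map (frobenius K 2) = FF n a := by
    have e : (FF n a).map (frobenius K 2) = ∏ i ∈ Finset.range n, (X + C (a ^ 2 ^ (i + 1))) := by
      rw [FF, Polynomial.map_prod]
      refine Finset.prod_congr rfl fun i _ => ?_
      rw [Polynomial.map_add, map_X, map_C, frobenius_def, ← pow_mul, pow_succ]
    rw [e]
    have h1 := Finset.prod_range_succ (fun i => (X + C (a ^ 2 ^ i) : K[X])) n
    have h2 := Finset.prod_range_succ' (fun i => (X + C (a ^ 2 ^ i) : K[X])) n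
    rw [h1] at h2
    simp only [han, pow_zero, pow_one] at h2
    exact (mul_right_cancel₀ (monic_X_add_C a).ne_zero h2).symm
  have hlift : FF n a ∈ Polynomial.lifts (algebraMap (ZMod 2) K) := by
    rw [lifts_iff_coeff_lifts]
    intro i
    have hc : (FF n a).coeff i ^ 2 = (FF n a).coeff i := by
      conv_rhs => rw [← hfrob]
      rw [coeff_map, frobenius_def]
    have : (FF n a).coeff i = 0 ∨ (FF n a).coeff i = 1 := by
      have : (FF n a).coeff i * ((FF n a).coeff i - 1) = 0 := by linear_combination hc
      rcases mul_eq_zero.1 this with h | h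
      · exact Or.inl h
      · exact Or.inr (sub_eq_zero.1 h)
    rcases this with h | h
    · exact ⟨0, by simp [h]⟩
    · exact ⟨1, by simp [h]⟩
  obtain ⟨G, hG, hGd, hGm⟩ := lifts_and_natDegree_eq_and_monic hlift (FF_monic n a)
  set P := minpoly (ZMod 2) a with hP
  have hPi : Irreducible P := minpoly.irreducible hint
  have hPm : P.Monic := minpoly.monic hint
  have hdv : G ∣ P ^ n := by
    rw [← Polynomial.map_dvd_map' (algebraMap (ZMod 2) K), hG, Polynomial.map_pow, FF]
    rw [← Finset.card_range n, ← Finset.prod_const, Finset.card_range]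
    refine Finset.prod_dvd_prod_of_dvd _ _ fun i _ => ?_
    have : (X + C (a ^ 2 ^ i) : K[X]) = X - C (a ^ 2 ^ i) := by
      rw [sub_eq_add_neg, ← C_neg, CharTwo.neg_eq]
    rw [this, dvd_iff_isRoot, IsRoot, eval_map_algebraMap]
    have h3 : aeval (a ^ 2 ^ i) P = (aeval a P) ^ 2 ^ i := by
      clear * - P
      induction i with
      | zero => simp
      | succ i ih =>
        rw [pow_succ, pow_mul, pow_mul, ← ih, ← expand_aeval, ZMod.expand_card, map_pow]
    rw [h3, minpoly.aeval]
    simp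
  obtain ⟨k, hk, has⟩ := (dvd_prime_pow hPi.prime n).1 hdv
  have hGP : G = P ^ k := eq_of_monic_of_associated hGm (hPm.pow k) has
  refine ⟨k, by rw [← hGP, hG], ?_⟩
  rw [← natDegree_pow, ← hGP, hGd, FF_natDegree]

lemma card_roots (n : ℕ) (hn : n ≠ 0) (hK : Fintype.card K = 2 ^ n) (P : F2X) (hP : Irreducible P)
    (hm : P.Monic) (hd : P.natDegree ∣ n) [DecidableEq F2X] :
    ((Finset.univ : Finset K).filter (fun a => minpoly (ZMod 2) a = P)).card = P.natDegree := by
  classical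
  have h1 := hP.natDegree_dvd_iff_dvd_X_pow_card_pow_sub_X.1 hd
  rw [Nat.card_zmod, ← hK] at h1
  have hs : Splits (P.map (algebraMap (ZMod 2) K)) := by
    refine Splits.of_dvd ?_ ?_ (map_dvd (algebraMap (ZMod 2) K) h1)
    · exact FiniteField.splits_X_pow_card_sub_X 2
    · exact Polynomial.map_ne_zero (FiniteField.X_pow_card_sub_X_ne_zero _ Fintype.one_lt_card)
  have hsep : P.Separable := PerfectField.separable_of_irreducible hP
  rw [← card_rootSet_eq_natDegree hsep hs, ← Set.toFinset_card]
  congr 1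
  ext a
  simp only [Finset.mem_filter, Finset.mem_univ, true_and, Set.mem_toFinset, mem_rootSet]
  constructor
  · rintro rfl; exact ⟨hP.ne_zero, minpoly.aeval _ _⟩
  · rintro ⟨_, h⟩; exact (minpoly.eq_of_irreducible_of_monic hP h hm).symm

/-- a choice of lift of the characteristic polynomial to `F_2` -/
lemma sum_K (n : ℕ) (hn : n ≠ 0) (hK : Fintype.card K = 2 ^ n) (w : ℂ) (hw : w ^ 8 = 1)
    (G : K → F2X) (hG : ∀ a, (G a).map (algebraMap (ZMod 2) K) = FF n a) :
    ∑ a : K, chi w (G a) = SS w n n := by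
  classical
  have hmem : ∀ a ∈ (Finset.univ : Finset K), minpoly (ZMod 2) a ∈ Irr n := by
    intro a _
    have hint : IsIntegral (ZMod 2) a := Algebra.IsIntegral.isIntegral a
    rw [mem_Irr]
    obtain ⟨k, -, hk⟩ := exists_G K n hK a
    exact ⟨minpoly.monic hint, Nat.le_of_dvd (by omega) ⟨k, by rw [mul_comm]; exact hk.symm⟩,
      minpoly.irreducible hint⟩
  rw [← Finset.sum_fiberwise_of_maps_to hmem, SS]
  refine Finset.sum_congr rfl fun P hP => ?_
  rw [mem_Irr] at hP
  have hpos := hP.2.2.natDegree_pos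
  by_cases hd : P.natDegree ∣ n
  · obtain ⟨k, hk⟩ := hd
    have hk0 : 1 ≤ k := by
      rcases Nat.eq_zero_or_pos k with rfl | h
      · simp at hk; omega
      · exact h
    have e : ∀ a ∈ (Finset.univ : Finset K).filter (fun a => minpoly (ZMod 2) a = P),
        chi w (G a) = chi w P ^ k := by
      intro a ha
      have ha : minpoly (ZMod 2) a = P := by simpa using ha
      obtain ⟨l, hl, hl'⟩ := exists_G K n hK a
      rw [ha] at hl hl'
      have : l = k := by
        apply Nat.eq_of_mul_eq_mul_right hpos
        rw [hl', hk, mul_comm]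
      subst this
      rw [← hG a] at hl
      rw [Polynomial.map_injective _ (algebraMap (ZMod 2) K).injective hl, chi_pow w hw P hP.1]
    rw [Finset.sum_congr rfl e, Finset.sum_const, card_roots K n hn hK P hP.2.2 hP.1 ⟨k, hk⟩,
      nsmul_eq_mul, Finset.sum_eq_single_of_mem k, if_pos (by rw [mul_comm]; exact hk.symm)]
    · rw [Finset.mem_Icc]; exact ⟨hk0, by nlinarith⟩
    · intro b _ hb
      rw [if_neg]
      intro h
      apply hb
      apply Nat.eq_of_mul_eq_mul_right hpos
      rw [h, hk, mul_comm]
  · rw [Finset.sum_eq_zero, Finset.sum_eq_zero]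
    · intro k _
      rw [if_neg]
      rintro rfl
      exact hd (dvd_mul_left _ _)
    · intro a ha
      have ha : minpoly (ZMod 2) a = P := by simpa using ha
      obtain ⟨l, -, hl'⟩ := exists_G K n hK a
      rw [ha] at hl'
      exact absurd ⟨l, by rw [mul_comm]; exact hl'.symm⟩ hd

lemma traceFn_eq (n k : ℕ) (hk : k ≤ n) (a : K) (G : F2X)
    (hG : G.map (algebraMap (ZMod 2) K) = FF n a) :
    traceFn 2 n k a = algebraMap (ZMod 2) K (G.reverse.coeff k) := by
  have hd : G.natDegree = n := by
    rw [← natDegree_map (algebraMap (ZMod 2) K), hG, FF_natDegree]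
  rw [coeff_reverse, hd, revAt_le hk, ← coeff_map, hG, FF,
    Finset.prod_X_add_C_coeff _ _ (by simp), Finset.card_range, Nat.sub_sub_self hk, traceFn]

end field
lemma rho_of_prod (n : ℕ) (γ : ℤ[X]) (s : Multiset ℂ)
    (h : γ.map (Int.castRingHom ℂ) = (s.map fun a => X - C a).prod) :
    rho n γ = (s.map (· ^ n)).sum := by
  rw [rho, h, roots_multiset_prod_X_sub_C]

lemma exists_yz (t : ℂ) : ∃ y z : ℂ, y + z = t - 1 ∧ y * z = -2 * t := by
  obtain ⟨s, hs⟩ := IsAlgClosed.exists_pow_nat_eq ((t - 1) ^ 2 + 8 * t) (n := 2) (by norm_num)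
  refine ⟨(t - 1 + s) / 2, (t - 1 - s) / 2, by ring, ?_⟩
  linear_combination (-1 / 4) * hs

lemma SS_prim (w y z : ℂ) (hw : w ^ 4 = -1) (h1 : y + z = w ^ 3 - 1) (h2 : y * z = -2 * w ^ 3)
    (n : ℕ) (hn : 1 ≤ n) : SS w n n = -((-(w + w ^ 3)) ^ n + y ^ n + z ^ n) := by
  apply SS_eq w _ _ _ _ _ _ _ _ n n le_rfl hn
  · linear_combination (w ^ 4 - 1) * hw
  · linear_combination (1 + w + w ^ 2 + w ^ 3) * hw
  · rw [cc_one]; linear_combination h1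
  · rw [cc_two]
    linear_combination (w ^ 3 + 1 + w ^ 2) * hw + (w + w ^ 3) * h1 - h2
  · rw [cc_three]
    linear_combination (w + w ^ 3 + 2 * (1 + w ^ 2)) * hw - (w + w ^ 3) * h2

lemma SS_quart (w : ℂ) (hw : w ^ 2 = -1) (n : ℕ) (hn : 1 ≤ n) :
    SS w n n = -(-(1 + w)) ^ n := by
  rw [SS_eq w _ _ (-(1 + w)) 0 0 _ _ _ n n le_rfl hn]
  · rw [zero_pow (by omega)]; ring
  · linear_combination (w ^ 2 - 1) * (w ^ 4 + 1) * hw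
  · linear_combination (1 + w) * (1 + w ^ 4) * hw
  · rw [cc_one]; ring
  · rw [cc_two]
    linear_combination (1 + w * (w ^ 4 - w ^ 2 + 1)) * hw
  · rw [cc_three]
    linear_combination (2 + w + w ^ 5) * hw

lemma SS_neg_one (n : ℕ) (hn : 1 ≤ n) : SS (-1) n n = 0 := by
  rw [SS_eq (-1) _ _ 0 0 0 _ _ _ n n le_rfl hn]
  · rw [zero_pow (by omega)]; ring
  · norm_num
  · norm_num
  · rw [cc_one]; ring
  · rw [cc_two]; ring
  · rw [cc_three]; ring

lemma rho_d21 (n : ℕ) (i : ℂ) (hi : i ^ 2 = -1) :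
    rho n d21 = (-(1 + i)) ^ n + (-(1 + -i)) ^ n := by
  rw [rho_of_prod n d21 {-(1 + i), -(1 + -i)}]
  · simp
  · have hC : (C i : ℂ[X]) ^ 2 = -1 := by rw [← C_pow, hi]; simp
    simp [d21]
    linear_combination hC

lemma rho_d22 (n : ℕ) (r : ℂ) (hr : r ^ 2 = -2) : rho n d22 = (-r) ^ n + r ^ n := by
  rw [rho_of_prod n d22 {-r, r}]
  · simp
  · have hC : (C r : ℂ[X]) ^ 2 = -2 := by rw [← C_pow, hr, C_neg, map_ofNat C 2]
    simp [d22]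
    linear_combination hC

lemma quad (t y z : ℂ) (h1 : y + z = t - 1) (h2 : y * z = -2 * t) :
    (X - C y) * (X - C z) = X ^ 2 + X - C t * (X + 2) := by
  have e1 : (C y + C z : ℂ[X]) = C t - 1 := by rw [← C_add, h1]; simp
  have e2 : (C y * C z : ℂ[X]) = -2 * C t := by rw [← C_mul, h2, C_mul, C_neg, map_ofNat C 2]
  linear_combination -X * e1 + e2

lemma rho_d81 (n : ℕ) (t y1 z1 y2 z2 y3 z3 y4 z4 : ℂ) (ht : t ^ 4 = -1)
    (h1 : y1 + z1 = t - 1) (h1' : y1 * z1 = -2 * t)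
    (h2 : y2 + z2 = t ^ 3 - 1) (h2' : y2 * z2 = -2 * t ^ 3)
    (h3 : y3 + z3 = -t - 1) (h3' : y3 * z3 = -2 * (-t))
    (h4 : y4 + z4 = -t ^ 3 - 1) (h4' : y4 * z4 = -2 * (-t ^ 3)) :
    rho n d81 = (y1 ^ n + z1 ^ n) + (y2 ^ n + z2 ^ n) + (y3 ^ n + z3 ^ n) + (y4 ^ n + z4 ^ n) := by
  rw [rho_of_prod n d81 {y1, z1, y2, z2, y3, z3, y4, z4}]
  · simp; ring
  · have hC : (C t : ℂ[X]) ^ 4 = -1 := by rw [← C_pow, ht]; simp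
    have q1 := quad _ _ _ h1 h1'
    have q2 := quad _ _ _ h2 h2'
    have q3 := quad _ _ _ h3 h3'
    have q4 := quad _ _ _ h4 h4'
    simp only [C_neg, C_pow] at q1 q2 q3 q4
    have e : (({y1, z1, y2, z2, y3, z3, y4, z4} : Multiset ℂ).map fun a => X - C a).prod =
      ((X - C y1) * (X - C z1)) * ((X - C y2) * (X - C z2)) * ((X - C y3) * (X - C z3)) *
        ((X - C y4) * (X - C z4)) := by simp; ring
    rw [e, q1, q2, q3, q4]
    simp [d81]
    have e2 : (X ^ 2 + X - C t * (X + 2)) * (X ^ 2 + X - C t ^ 3 * (X + 2)) *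
        (X ^ 2 + X + C t * (X + 2)) * (X ^ 2 + X + C t ^ 3 * (X + 2)) =
        (X ^ 2 + X) ^ 4 - (C t ^ 4 + 1) * (C t ^ 2) * (X ^ 2 + X) ^ 2 * (X + 2) ^ 2
         + (C t ^ 4) ^ 2 * (X + 2 : ℂ[X]) ^ 4 := by ring
    rw [e2, hC]
    ring

lemma sum_eight (t : ℂ) (ht : t ^ 4 = -1) (e : ℕ) (he : e < 8) :
    (1 : ℂ) ^ e + t ^ e + (t ^ 2) ^ e + (t ^ 3) ^ e + (-1) ^ e + (-t) ^ e + (-t ^ 2) ^ e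
      + (-t ^ 3) ^ e = if e = 0 then 8 else 0 := by
  have h8 : t ^ 8 = 1 := by linear_combination (t ^ 4 - 1) * ht
  interval_cases e
  · norm_num
  · norm_num
    ring
  · norm_num
    linear_combination (2 + 2 * t ^ 2) * ht
  · norm_num
    ring
  · norm_num
    linear_combination (2 * (t ^ 8 - t ^ 4 + 2) + 2 * t ^ 4 - 2) * ht
  · norm_num
    ring
  · norm_num
    linear_combination (2 + 2 * t ^ 2) * ht + (2 * t ^ 4 + 2 * t ^ 2 * (t ^ 8 + 1)) * h8
  · norm_num
    ring

theorem statement14 (n : ℕ) (hn : 4 ≤ n)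
    (K : Type) [Field K] [Fintype K] (hK : Fintype.card K = 2 ^ n) :
    (Nat.card {a : K // traceFn 2 n 1 a = 0 ∧ traceFn 2 n 2 a = 0 ∧ traceFn 2 n 4 a = 0} : ℂ)
      = 2 ^ (n - 3) - (1 / 8) * (rho n d21 + 2 * rho n d22 + rho n d81) := by
  classical
  have hchar : CharP K 2 := charP_of_card_eq_prime_pow hK
  let _ : Algebra (ZMod 2) K := ZMod.algebra K 2
  choose k hk _ using exists_G K n hK
  let G : K → F2X := fun a => minpoly (ZMod 2) a ^ k a
  have hG : ∀ a, (G a).map (algebraMap (ZMod 2) K) = FF n a := fun a => (hk a).symm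
  have hcond : ∀ a, (traceFn 2 n 1 a = 0 ∧ traceFn 2 n 2 a = 0 ∧ traceFn 2 n 4 a = 0) ↔
      lg (G a) = 0 := by
    intro a
    rw [traceFn_eq K n 1 (by omega) a (G a) (hG a), traceFn_eq K n 2 (by omega) a (G a) (hG a),
      traceFn_eq K n 4 (by omega) a (G a) (hG a), lg, tab_zero]
    simp only [map_eq_zero]
  obtain ⟨t, ht⟩ := IsAlgClosed.exists_pow_nat_eq (-1 : ℂ) (n := 4) (by norm_num)
  have h8 : t ^ 8 = 1 := by linear_combination (t ^ 4 - 1) * ht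
  have hSum : ∀ w : ℂ, w ^ 8 = 1 → ∑ a : K, w ^ lg (G a) = SS w n n :=
    fun w hw => sum_K K n (by omega) hK w hw G hG
  have hcount : (8 : ℂ) * (Nat.card {a : K // traceFn 2 n 1 a = 0 ∧ traceFn 2 n 2 a = 0 ∧
      traceFn 2 n 4 a = 0} : ℂ) = 2 ^ n + SS t n n + SS (t ^ 2) n n + SS (t ^ 3) n n +
        SS (-1) n n + SS (-t) n n + SS (-t ^ 2) n n + SS (-t ^ 3) n n := by
    rw [← hSum t h8, ← hSum (t ^ 2) (by linear_combination (t ^ 8 + 1) * h8),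
      ← hSum (t ^ 3) (by linear_combination (t ^ 16 + t ^ 8 + 1) * h8),
      ← hSum (-1) (by norm_num), ← hSum (-t) (by linear_combination h8),
      ← hSum (-t ^ 2) (by linear_combination (t ^ 8 + 1) * h8),
      ← hSum (-t ^ 3) (by linear_combination (t ^ 16 + t ^ 8 + 1) * h8)]
    have h1 : (2 : ℂ) ^ n = ∑ a : K, (1 : ℂ) ^ lg (G a) := by
      simp [hK]
    rw [h1]
    simp only [← Finset.sum_add_distrib]
    rw [Finset.sum_congr rfl fun a _ => sum_eight t ht (lg (G a)) (tab_lt _ _ _ _),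
      ← Finset.sum_filter, Finset.sum_const, nsmul_eq_mul, mul_comm]
    congr 2
    rw [Nat.card_eq_fintype_card, Fintype.card_subtype]
    congr 1
    ext a
    simp [hcond a]
  obtain ⟨y1, z1, a1, b1⟩ := exists_yz t
  obtain ⟨y2, z2, a2, b2⟩ := exists_yz (t ^ 3)
  obtain ⟨y3, z3, a3, b3⟩ := exists_yz (-t)
  obtain ⟨y4, z4, a4, b4⟩ := exists_yz (-t ^ 3)
  have hn1 : 1 ≤ n := by omega
  rw [SS_prim t y2 z2 ht a2 b2 n hn1,
    SS_prim (t ^ 3) y1 z1 (by linear_combination (t ^ 8 - t ^ 4 + 1) * ht)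
      (by linear_combination a1 - t * h8) (by linear_combination b1 + 2 * t * h8) n hn1,
    SS_prim (-t) y4 z4 (by linear_combination ht) (by linear_combination a4)
      (by linear_combination b4) n hn1,
    SS_prim (-t ^ 3) y3 z3 (by linear_combination (t ^ 8 - t ^ 4 + 1) * ht)
      (by linear_combination a3 + t * h8) (by linear_combination b3 - 2 * t * h8) n hn1,
    SS_quart (t ^ 2) (by linear_combination ht) n hn1,
    SS_quart (-t ^ 2) (by linear_combination ht) n hn1, SS_neg_one n hn1] at hcount
  rw [rho_d21 n (t ^ 2) (by linear_combination ht),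
    rho_d22 n (t + t ^ 3) (by linear_combination (t ^ 2 + 2) * ht),
    rho_d81 n t y1 z1 y2 z2 y3 z3 y4 z4 ht a1 b1 a2 b2 a3 b3 a4 b4]
  have e1 : t ^ 3 + (t ^ 3) ^ 3 = t + t ^ 3 := by linear_combination t * h8
  have e2 : -(-t + (-t) ^ 3) = t + t ^ 3 := by ring
  have e3 : -(-t ^ 3 + (-t ^ 3) ^ 3) = t + t ^ 3 := by linear_combination t * h8
  have e4 : (2 : ℂ) ^ n = 8 * 2 ^ (n - 3) := by
    obtain ⟨r, rfl⟩ : ∃ r, n = r + 3 := ⟨n - 3, by omega⟩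
    rw [Nat.add_sub_cancel, pow_add]; ring
  rw [e1, e2, e3, e4] at hcount
  linear_combination hcount / 8
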